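/- Let ρ*(π, m, δ) denote the unique ρ ∈ (0,1) satisfying π·δ·g(ρ/(2πmδ)) + (1−π)·δ·g(ρ/(2(1−π)mδ)) = 1 − ρ². Then: (i) for fixed π ∈ (0,1) and δ > 0, the map m ↦ ρ*(π,m,δ) is strictly increasing on (0,∞); (ii) for fixed π ∈ (0,1) and m > 0, the map δ ↦ ρ*(π,m,δ) is strictly increasing on (0,∞); (iii) for fixed m > 0 and δ > 0, the map π ↦ ρ*(π,m,δ) is strictly increasing on (0, 1/2). -/

import Mathlib

open MeasureTheory

/-- The standard normal density. -/
noncomputable def normPDF (x : ℝ) : ℝ := Real.exp (-x ^ 2 / 2) / Real.sqrt (2 * Real.pi)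

/-- The standard normal cumulative distribution function. -/
noncomputable def normCDF (x : ℝ) : ℝ := ∫ t in Set.Iic x, normPDF t

/-- `g₁(x) = x·Φ(x) + φ(x)`, equal to `E[(Z+x)₊]` for standard normal `Z`. -/
noncomputable def g1 (x : ℝ) : ℝ := x * normCDF x + normPDF x

/-- `g₂(x) = (x²+1)·Φ(x) + x·φ(x)`, equal to `E[(Z+x)₊²]` for standard normal `Z`. -/
noncomputable def g2 (x : ℝ) : ℝ := (x ^ 2 + 1) * normCDF x + x * normPDF x

/-- The inverse of `g₁` (on its range `(0,∞)`). -/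
noncomputable def g1inv : ℝ → ℝ := Function.invFun g1

/-- `g = g₂ ∘ g₁⁻¹`. -/
noncomputable def gfn (t : ℝ) : ℝ := g2 (g1inv t)

lemma pdf_pos (x : ℝ) : 0 < normPDF x := by unfold normPDF; positivity

lemma pdf_deriv (x : ℝ) : HasDerivAt normPDF (-x * normPDF x) x := by
  have h1 : HasDerivAt (fun x : ℝ => -x ^ 2 / 2) (-x) x := by
    have := ((hasDerivAt_pow 2 x).neg).div_const 2
    refine this.congr_deriv ?_
    norm_num
    ring
  have := (h1.exp).div_const (Real.sqrt (2 * Real.pi))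
  refine HasDerivAt.congr_deriv (f := normPDF) this ?_
  unfold normPDF
  ring

lemma pdf_cont : Continuous normPDF :=
  continuous_iff_continuousAt.2 fun x => (pdf_deriv x).continuousAt

lemma pdf_int : Integrable normPDF := by
  have h : normPDF = ProbabilityTheory.gaussianPDFReal 0 1 := by
    funext x
    simp [normPDF, ProbabilityTheory.gaussianPDFReal]
    ring
  rw [h]
  exact ProbabilityTheory.integrable_gaussianPDFReal 0 1

lemma cdf_deriv (x : ℝ) : HasDerivAt normCDF (normPDF x) x := by
  have h : normCDF = fun x => (∫ t in (0:ℝ)..x, normPDF t) + normCDF 0 := by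
    funext y
    have := intervalIntegral.integral_Iic_sub_Iic (a := 0) (b := y) (μ := volume) (f := normPDF)
      pdf_int.integrableOn pdf_int.integrableOn
    unfold normCDF
    linarith
  rw [h]
  exact (intervalIntegral.integral_hasDerivAt_right (pdf_cont.intervalIntegrable _ _)
    pdf_cont.stronglyMeasurable.stronglyMeasurableAtFilter pdf_cont.continuousAt).add_const _

lemma smono_of {f f' : ℝ → ℝ} (h : ∀ x, HasDerivAt f (f' x) x) (hp : ∀ x, 0 < f' x) :
    StrictMono f := by
  apply strictMono_of_deriv_pos
  intro x
  rw [(h x).deriv]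
  exact hp x

lemma cdf_pos (x : ℝ) : 0 < normCDF x := by
  have h1 : 0 ≤ normCDF (x - 1) :=
    setIntegral_nonneg measurableSet_Iic fun t _ => (pdf_pos t).le
  have := smono_of cdf_deriv pdf_pos (show x - 1 < x by linarith)
  linarith

lemma sq_pdf_tendsto : Filter.Tendsto (fun x => x ^ 2 * normPDF x) Filter.atBot (nhds 0) := by
  have h1 := Real.tendsto_pow_mul_exp_neg_atTop_nhds_zero 1
  have h2 : Filter.Tendsto (fun x : ℝ => x ^ 2 / 2) Filter.atBot Filter.atTop := by
    apply Filter.Tendsto.atTop_div_const (by norm_num)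
    have := (Filter.tendsto_pow_atTop (α := ℝ) two_ne_zero).comp Filter.tendsto_neg_atBot_atTop
    refine this.congr fun x => ?_
    simp
  have h3 := (h1.comp h2).const_mul (2 / Real.sqrt (2 * Real.pi))
  rw [mul_zero] at h3
  refine h3.congr fun x => ?_
  simp only [Function.comp, normPDF, pow_one]
  rw [neg_div]
  ring

lemma tendsto_zero_of_bd {f : ℝ → ℝ} (C : ℝ) (h : ∀ x ≤ -1, |f x| ≤ C * (x ^ 2 * normPDF x)) :
    Filter.Tendsto f Filter.atBot (nhds 0) := by
  have h3 := sq_pdf_tendsto.const_mul C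
  rw [mul_zero] at h3
  refine squeeze_zero_norm' ?_ h3
  filter_upwards [Filter.eventually_le_atBot (-1 : ℝ)] with x hx
  exact h x hx

lemma pos_of {f f' : ℝ → ℝ} (h : ∀ x, HasDerivAt f (f' x) x) (hp : ∀ x, 0 < f' x) (C : ℝ)
    (hb : ∀ x ≤ -1, |f x| ≤ C * (x ^ 2 * normPDF x)) (x : ℝ) : 0 < f x := by
  have hm := smono_of h hp
  have h1 := hm.monotone.le_of_tendsto (tendsto_zero_of_bd C hb) (x - 1)
  have := hm (show x - 1 < x by linarith)
  linarith

lemma pdf_tendsto : Filter.Tendsto normPDF Filter.atBot (nhds 0) := by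
  apply tendsto_zero_of_bd 1
  intro x hx
  rw [abs_of_pos (pdf_pos x)]
  have := pdf_pos x
  have h : 1 ≤ x ^ 2 := by nlinarith
  nlinarith

lemma cdf_le (x : ℝ) (hx : x ≤ -1) : normCDF x ≤ normPDF x := by
  have hd : ∀ t ∈ Set.Iic x, HasDerivAt normPDF (-t * normPDF t) t := fun t _ => pdf_deriv t
  have hint : IntegrableOn (fun t => -t * normPDF t) (Set.Iic x) := by
    have := integrable_mul_exp_neg_mul_sq (b := 1 / 2) (by norm_num)
    have h2 := (this.const_mul (-1 / Real.sqrt (2 * Real.pi))).integrableOn (s := Set.Iic x)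
    refine h2.congr_fun (fun t _ => ?_) measurableSet_Iic
    simp only [normPDF]
    rw [show -(1 / 2 : ℝ) * t ^ 2 = -t ^ 2 / 2 by ring]
    ring
  have h := integral_Iic_of_hasDerivAt_of_tendsto' hd hint pdf_tendsto
  rw [sub_zero] at h
  rw [← h]
  unfold normCDF
  apply setIntegral_mono_on pdf_int.integrableOn hint measurableSet_Iic
  intro t ht
  have h1 : t ≤ -1 := le_trans ht hx
  have := pdf_pos t
  nlinarith

lemma g1_deriv (x : ℝ) : HasDerivAt g1 (normCDF x) x := by
  have := ((hasDerivAt_id x).mul (cdf_deriv x)).add (pdf_deriv x)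
  refine this.congr_deriv ?_
  simp

lemma g2_deriv (x : ℝ) : HasDerivAt g2 (2 * g1 x) x := by
  have := (((hasDerivAt_pow 2 x).add_const 1).mul (cdf_deriv x)).add
    ((hasDerivAt_id x).mul (pdf_deriv x))
  refine this.congr_deriv ?_
  simp [g1]
  ring

lemma g1_bd (x : ℝ) (hx : x ≤ -1) : |g1 x| ≤ 2 * (x ^ 2 * normPDF x) := by
  have h1 := cdf_le x hx
  have h2 := cdf_pos x
  have h3 := pdf_pos x
  have h4 : 1 ≤ x ^ 2 := by nlinarith
  have h5 : -x ≤ x ^ 2 := by nlinarith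
  have h6 : -x * normCDF x ≤ x ^ 2 * normPDF x := by
    apply mul_le_mul h5 h1 h2.le; positivity
  have h7 : 0 ≤ -x * normCDF x := mul_nonneg (by linarith) h2.le
  have h8 : normPDF x ≤ x ^ 2 * normPDF x := by nlinarith
  unfold g1
  rw [abs_le]
  constructor <;> nlinarith

lemma g1_pos (x : ℝ) : 0 < g1 x := pos_of g1_deriv cdf_pos 2 g1_bd x

lemma M_pos (x : ℝ) : 0 < normCDF x ^ 2 / normPDF x - g1 x := by
  apply pos_of (f := fun x => normCDF x ^ 2 / normPDF x - g1 x)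
    (f' := fun x => normCDF x * g1 x / normPDF x) _ _ 3
  · intro x hx
    have h1 := cdf_le x hx
    have h2 := cdf_pos x
    have h3 := pdf_pos x
    have h4 : 1 ≤ x ^ 2 := by nlinarith
    have h8 : normPDF x ≤ x ^ 2 * normPDF x := by nlinarith
    have h9 : normCDF x ^ 2 / normPDF x ≤ normPDF x := by
      rw [div_le_iff₀ h3]; nlinarith
    have h10 : 0 < normCDF x ^ 2 / normPDF x := by positivity
    have h11 := abs_le.1 (g1_bd x hx)
    rw [abs_le]
    constructor <;> linarith [h11.1, h11.2]
  · intro x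
    have h3 := (pdf_pos x).ne'
    refine ((((cdf_deriv x).pow 2).div (pdf_deriv x) h3).sub (g1_deriv x)).congr_deriv ?_
    unfold g1
    simp
    field_simp
    ring
  · intro x
    have := pdf_pos x
    have := cdf_pos x
    have := g1_pos x
    positivity

lemma g1_pdf_lt (x : ℝ) : g1 x * normPDF x < normCDF x ^ 2 := by
  have := M_pos x
  rw [← lt_div_iff₀ (pdf_pos x)]
  linarith

/-- derivative of `g` at `g1 x` -/
noncomputable def slopeFn (x : ℝ) : ℝ := 2 * g1 x / normCDF x

lemma slope_mono : StrictMono slopeFn := by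
  apply smono_of (f' := fun x => 2 * (normCDF x ^ 2 - g1 x * normPDF x) / normCDF x ^ 2)
  · intro x
    refine (((g1_deriv x).const_mul 2).div (cdf_deriv x) (cdf_pos x).ne').congr_deriv ?_
    ring
  · intro x
    have := g1_pdf_lt x
    have h := cdf_pos x
    have : 0 < normCDF x ^ 2 - g1 x * normPDF x := by linarith
    positivity

lemma slope_pos (x : ℝ) : 0 < slopeFn x := by
  have := cdf_pos x
  have := g1_pos x
  unfold slopeFn
  positivity

lemma L_pos (x : ℝ) : 0 < g1 x * slopeFn x - g2 x := by
  apply pos_of (f := fun x => g1 x * slopeFn x - g2 x)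
    (f' := fun x => 2 * g1 x * (normCDF x ^ 2 - g1 x * normPDF x) / normCDF x ^ 2) _ _ 5
  · intro x hx
    have h1 := cdf_le x hx
    have h2 := cdf_pos x
    have h3 := pdf_pos x
    have h0 := g1_pos x
    have hl := g1_pdf_lt x
    have h4 : 1 ≤ x ^ 2 := by nlinarith
    have h8 : normPDF x ≤ x ^ 2 * normPDF x := by nlinarith
    have h5 : -x ≤ x ^ 2 := by nlinarith
    have hg : g1 x ≤ normPDF x := by unfold g1; nlinarith
    have h12 : g1 x * slopeFn x ≤ 2 * normPDF x := by
      unfold slopeFn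
      rw [← mul_div_assoc, div_le_iff₀ h2]
      have : g1 x * g1 x ≤ g1 x * normPDF x := mul_le_mul_of_nonneg_left hg h0.le
      nlinarith
    have h13 : 0 < g1 x * slopeFn x := mul_pos h0 (slope_pos x)
    have h14 : (x ^ 2 + 1) * normCDF x ≤ (x ^ 2 + 1) * normPDF x :=
      mul_le_mul_of_nonneg_left h1 (by positivity)
    have h15 : 0 < (x ^ 2 + 1) * normCDF x := by positivity
    have h16 : -x * normPDF x ≤ x ^ 2 * normPDF x := mul_le_mul_of_nonneg_right h5 h3.le
    have h17 : 0 ≤ -x * normPDF x := mul_nonneg (by linarith) h3.le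
    unfold g2
    rw [abs_le]
    constructor <;> linarith
  · intro x
    have h3 := (cdf_pos x).ne'
    have hs : HasDerivAt slopeFn _ x := ((g1_deriv x).const_mul 2).div (cdf_deriv x) h3
    refine (((g1_deriv x).mul hs).sub (g2_deriv x)).congr_deriv ?_
    unfold slopeFn
    field_simp
    ring
  · intro x
    have := g1_pdf_lt x
    have h := cdf_pos x
    have := g1_pos x
    have : 0 < normCDF x ^ 2 - g1 x * normPDF x := by linarith
    positivity

lemma tangent (x y : ℝ) (h : x ≠ y) : g2 x + slopeFn x * (g1 y - g1 x) < g2 y := by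
  have hd : ∀ z, HasDerivAt (fun y => g2 y - slopeFn x * g1 y)
      (normCDF z * (slopeFn z - slopeFn x)) z := by
    intro z
    refine ((g2_deriv z).sub ((g1_deriv z).const_mul (slopeFn x))).congr_deriv ?_
    have := (cdf_pos z).ne'
    unfold slopeFn
    field_simp
  have hc : Continuous (fun y => g2 y - slopeFn x * g1 y) :=
    continuous_iff_continuousAt.2 fun z => (hd z).continuousAt
  rcases lt_or_gt_of_ne h with h | h
  · have := strictMonoOn_of_deriv_pos (convex_Ici x) hc.continuousOn (fun z hz => by
      rw [(hd z).deriv]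
      rw [interior_Ici] at hz
      exact mul_pos (cdf_pos z) (sub_pos.2 (slope_mono hz)))
      (Set.self_mem_Ici) (Set.mem_Ici.2 h.le) h
    simp only at this
    linarith
  · have := strictAntiOn_of_deriv_neg (convex_Iic x) hc.continuousOn (fun z hz => by
      rw [(hd z).deriv]
      rw [interior_Iic] at hz
      exact mul_neg_of_pos_of_neg (cdf_pos z) (sub_neg.2 (slope_mono hz)))
      (Set.mem_Iic.2 h.le) (Set.self_mem_Iic) h
    simp only at this
    linarith

lemma g1_surj (t : ℝ) (ht : 0 < t) : ∃ x, g1 x = t := by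
  have hc : Continuous g1 := continuous_iff_continuousAt.2 fun z => (g1_deriv z).continuousAt
  have h0 := tendsto_zero_of_bd 2 g1_bd
  obtain ⟨a, ha⟩ := (h0.eventually (gt_mem_nhds ht)).exists
  have hb : t ≤ g1 (t / normCDF 0) := by
    have h2 := cdf_pos 0
    have h3 := (smono_of cdf_deriv pdf_pos).monotone (show 0 ≤ t / normCDF 0 by positivity)
    have h4 := pdf_pos (t / normCDF 0)
    have h5 : t / normCDF 0 * normCDF 0 ≤ t / normCDF 0 * normCDF (t / normCDF 0) :=
      mul_le_mul_of_nonneg_left h3 (by positivity)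
    rw [div_mul_cancel₀ _ h2.ne'] at h5
    unfold g1
    linarith
  obtain ⟨x, hx⟩ := mem_range_of_exists_le_of_exists_ge hc ⟨a, ha.le⟩ ⟨_, hb⟩
  exact ⟨x, hx⟩

lemma g1_inv (t : ℝ) (ht : 0 < t) : g1 (g1inv t) = t := Function.invFun_eq (g1_surj t ht)

/-- derivative of `gfn` -/
noncomputable def sg (t : ℝ) : ℝ := slopeFn (g1inv t)

lemma gfn_tangent {t u : ℝ} (ht : 0 < t) (hu : 0 < u) (h : t ≠ u) :
    gfn t + sg t * (u - t) < gfn u := by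
  have := tangent (g1inv t) (g1inv u) (fun e => h (by rw [← g1_inv t ht, e, g1_inv u hu]))
  rwa [g1_inv t ht, g1_inv u hu] at this

lemma gfn_lt {t : ℝ} (ht : 0 < t) : gfn t < t * sg t := by
  have := L_pos (g1inv t)
  rw [g1_inv t ht] at this
  unfold gfn sg
  linarith

lemma gfn_mono {t u : ℝ} (ht : 0 < t) (h : t < u) : gfn t < gfn u := by
  have h1 := gfn_tangent ht (ht.trans h) h.ne
  have : 0 < sg t * (u - t) := mul_pos (slope_pos _) (by linarith)
  linarith

/-- perspective tangent -/
lemma persp {c p q : ℝ} (hc : 0 < c) (hp : 0 < p) (hq : 0 < q) (h : p ≠ q) :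
    q * gfn (c / q) + (p - q) * (gfn (c / q) - c / q * sg (c / q)) < p * gfn (c / p) := by
  have h1 : c / q ≠ c / p := by
    intro e
    rw [div_eq_div_iff hq.ne' hp.ne'] at e
    exact h (mul_left_cancel₀ hc.ne' e)
  have := mul_lt_mul_of_pos_left (gfn_tangent (div_pos hc hq) (div_pos hc hp) h1) hp
  refine lt_of_eq_of_lt ?_ this
  field_simp
  ring

lemma persp_anti {c p q : ℝ} (hc : 0 < c) (hp : 0 < p) (h : p < q) :
    q * gfn (c / q) < p * gfn (c / p) := by
  have h1 := persp hc hp (hp.trans h) h.ne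
  have h2 := gfn_lt (div_pos hc (hp.trans h))
  have : 0 < (p - q) * (gfn (c / q) - c / q * sg (c / q)) :=
    mul_pos_of_neg_of_neg (by linarith) (by linarith)
  linarith

lemma persp_sum {c p q : ℝ} (hc : 0 < c) (hp : 0 < p) (h : p < q) (hq : q < 1 / 2) :
    q * gfn (c / q) + (1 - q) * gfn (c / (1 - q)) <
      p * gfn (c / p) + (1 - p) * gfn (c / (1 - p)) := by
  have hq0 := hp.trans h
  have h1 := persp hc hp hq0 h.ne
  have h2 := persp hc (p := 1 - p) (q := 1 - q) (by linarith) (by linarith) (by linarith)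
  have h3 := persp hc (p := 1 - q) (q := q) (by linarith) (by linarith) (by linarith)
  have h4 := persp hc (p := q) (q := 1 - q) (by linarith) (by linarith) (by linarith)
  generalize gfn (c / q) - c / q * sg (c / q) = A at *
  generalize gfn (c / (1 - q)) - c / (1 - q) * sg (c / (1 - q)) = B at *
  have h5 : 0 < (1 - 2 * q) * (B - A) := by nlinarith
  have h6 : 0 < B - A := by
    by_contra hh
    push Not at hh
    nlinarith
  nlinarith

lemma lhs_mono {p m δ r s : ℝ} (hp : p ∈ Set.Ioo (0 : ℝ) 1) (hm : 0 < m) (hδ : 0 < δ)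
    (hr : 0 < r) (h : r ≤ s) :
    p * δ * gfn (r / (2 * p * m * δ)) + (1 - p) * δ * gfn (r / (2 * (1 - p) * m * δ)) + r ^ 2 ≤
    p * δ * gfn (s / (2 * p * m * δ)) + (1 - p) * δ * gfn (s / (2 * (1 - p) * m * δ)) + s ^ 2 := by
  rcases h.eq_or_lt with rfl | h
  · exact le_rfl
  obtain ⟨h0, h1⟩ := hp
  have h1 : 0 < 1 - p := by linarith
  have a1 := gfn_mono (t := r / (2 * p * m * δ)) (u := s / (2 * p * m * δ)) (by positivity)
    (by gcongr)
  have a2 := gfn_mono (t := r / (2 * (1 - p) * m * δ)) (u := s / (2 * (1 - p) * m * δ))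
    (by positivity) (by gcongr)
  gcongr

/-- Comparison principle. -/
lemma compare {p m δ p' m' δ' r s : ℝ}
    (hp' : p' ∈ Set.Ioo (0 : ℝ) 1) (hm' : 0 < m') (hδ' : 0 < δ') (hs : 0 < s)
    (er : p * δ * gfn (r / (2 * p * m * δ)) + (1 - p) * δ * gfn (r / (2 * (1 - p) * m * δ)) =
      1 - r ^ 2)
    (es : p' * δ' * gfn (s / (2 * p' * m' * δ')) +
      (1 - p') * δ' * gfn (s / (2 * (1 - p') * m' * δ')) = 1 - s ^ 2)
    (h : p' * δ' * gfn (r / (2 * p' * m' * δ')) +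
      (1 - p') * δ' * gfn (r / (2 * (1 - p') * m' * δ')) <
      p * δ * gfn (r / (2 * p * m * δ)) + (1 - p) * δ * gfn (r / (2 * (1 - p) * m * δ))) :
    r < s := by
  by_contra hh
  push Not at hh
  have := lhs_mono hp' hm' hδ' hs hh
  linarith

/-- Monotonicity of the limiting cosine angle `ρ*(π, m, δ)`:
strictly increasing in the signal strength `m`, in the aspect ratio `δ`, and in
the imbalance ratio `π` on `(0, 1/2)`. -/
theorem stmt_12 (ρstar : ℝ → ℝ → ℝ → ℝ)
    (hρstar : ∀ p m δ : ℝ, p ∈ Set.Ioo (0 : ℝ) 1 → 0 < m → 0 < δ →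
      ρstar p m δ ∈ Set.Ioo (0 : ℝ) 1 ∧
      p * δ * gfn (ρstar p m δ / (2 * p * m * δ)) +
          (1 - p) * δ * gfn (ρstar p m δ / (2 * (1 - p) * m * δ)) =
        1 - (ρstar p m δ) ^ 2)
    :
    (∀ p δ : ℝ, p ∈ Set.Ioo (0 : ℝ) 1 → 0 < δ →
      StrictMonoOn (fun m => ρstar p m δ) (Set.Ioi 0)) ∧
    (∀ p m : ℝ, p ∈ Set.Ioo (0 : ℝ) 1 → 0 < m →
      StrictMonoOn (fun δ => ρstar p m δ) (Set.Ioi 0)) ∧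
    (∀ m δ : ℝ, 0 < m → 0 < δ →
      StrictMonoOn (fun p => ρstar p m δ) (Set.Ioo 0 (1 / 2))) := by
  refine ⟨?_, ?_, ?_⟩
  · intro p δ hp hδ m hm m' hm' h
    rw [Set.mem_Ioi] at hm hm'
    obtain ⟨⟨r0, _⟩, er⟩ := hρstar p m δ hp hm hδ
    obtain ⟨⟨s0, _⟩, es⟩ := hρstar p m' δ hp hm' hδ
    refine compare hp hm' hδ s0 er es ?_
    obtain ⟨h0, h1⟩ := hp
    have h1 : 0 < 1 - p := by linarith
    have a1 := gfn_mono (t := ρstar p m δ / (2 * p * m' * δ)) (u := ρstar p m δ / (2 * p * m * δ))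
      (by positivity) (by gcongr)
    have a2 := gfn_mono (t := ρstar p m δ / (2 * (1 - p) * m' * δ))
      (u := ρstar p m δ / (2 * (1 - p) * m * δ)) (by positivity) (by gcongr)
    gcongr
  · intro p m hp hm δ hδ δ' hδ' h
    rw [Set.mem_Ioi] at hδ hδ'
    obtain ⟨⟨r0, _⟩, er⟩ := hρstar p m δ hp hm hδ
    obtain ⟨⟨s0, _⟩, es⟩ := hρstar p m δ' hp hm hδ'
    refine compare hp hm hδ' s0 er es ?_
    obtain ⟨h0, h1⟩ := hp
    have h1 : 0 < 1 - p := by linarith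
    have a1 := persp_anti (c := ρstar p m δ / (2 * p * m)) (by positivity) hδ h
    have a2 := persp_anti (c := ρstar p m δ / (2 * (1 - p) * m)) (by positivity) hδ h
    rw [div_div, div_div] at a1 a2
    simp only [mul_assoc] at a1 a2 ⊢
    gcongr
  · intro m δ hm hδ p hp p' hp' h
    have hp1 : p ∈ Set.Ioo (0 : ℝ) 1 := ⟨hp.1, by linarith [hp.2]⟩
    have hp1' : p' ∈ Set.Ioo (0 : ℝ) 1 := ⟨hp'.1, by linarith [hp'.2]⟩
    obtain ⟨⟨r0, _⟩, er⟩ := hρstar p m δ hp1 hm hδ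
    obtain ⟨⟨s0, _⟩, es⟩ := hρstar p' m δ hp1' hm hδ
    refine compare hp1' hm hδ s0 er es ?_
    have a1 := persp_sum (c := ρstar p m δ / (2 * m * δ)) (by positivity) hp.1 h hp'.2
    have e : ∀ q : ℝ, ρstar p m δ / (2 * q * m * δ) = ρstar p m δ / (2 * m * δ) / q := by
      intro q
      rw [div_div]
      congr 1
      ring
    simp only [e]
    have := mul_lt_mul_of_pos_left a1 hδ
    linarith
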